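/- Every positive semi-definite quartic form in ℝ[x,y,z] is a sum of squares of quadratic forms. -/

import Mathlib

open MvPolynomial

/-- A function on `ℝ³` given by a homogeneous polynomial of degree `n`. -/
def HForm (n : ℕ) (F : (Fin 3 → ℝ) → ℝ) : Prop :=
  ∃ p : MvPolynomial (Fin 3) ℝ, p.IsHomogeneous n ∧ ∀ v, F v = eval v p

/-- `F` dominates the square of a nonzero quadratic form. -/
def Good (F : (Fin 3 → ℝ) → ℝ) : Prop :=
  ∃ q : (Fin 3 → ℝ) → ℝ, HForm 2 q ∧ (∃ v, q v ≠ 0) ∧ ∀ v, q v ^ 2 ≤ F v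

lemma HForm.comp {n : ℕ} {F : (Fin 3 → ℝ) → ℝ} (hF : HForm n F)
    (T : (Fin 3 → ℝ) →ₗ[ℝ] (Fin 3 → ℝ)) : HForm n (fun v => F (T v)) := by
  obtain ⟨p, hp, hpe⟩ := hF
  refine ⟨aeval (fun i => ∑ j, C (LinearMap.toMatrix' T i j) * X j) p, ?_, ?_⟩
  · have := hp.aeval (n := 1) (fun i => ∑ j, (C (LinearMap.toMatrix' T i j) * X j :
      MvPolynomial (Fin 3) ℝ)) (fun i => IsHomogeneous.sum _ _ _
        (fun j _ => isHomogeneous_C_mul_X _ _))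
    simpa using this
  · intro v
    have h1 : T v = fun i => eval v (∑ j, (C (LinearMap.toMatrix' T i j) * X j :
        MvPolynomial (Fin 3) ℝ)) := by
      funext i
      conv_lhs => rw [← LinearMap.toMatrix'_mulVec T v]
      simp [Matrix.mulVec, dotProduct]
    change F (T v) = _
    rw [hpe, h1]
    rw [aeval_def, eval_eval₂]
    have h2 : (eval v).comp (algebraMap ℝ (MvPolynomial (Fin 3) ℝ)) = RingHom.id ℝ := by
      ext r
      simp
    rw [h2]
    rfl

lemma Good.of_comp {F : (Fin 3 → ℝ) → ℝ} (T S : (Fin 3 → ℝ) →ₗ[ℝ] (Fin 3 → ℝ))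
    (hTS : ∀ v, T (S v) = v) (hST : ∀ v, S (T v) = v)
    (h : Good (fun v => F (T v))) : Good F := by
  obtain ⟨q, hq, ⟨v, hv⟩, hle⟩ := h
  refine ⟨fun v => q (S v), hq.comp S, ⟨T v, by simpa [hST] using hv⟩, fun w => ?_⟩
  have := hle (S w)
  simpa [hTS] using this

lemma good_intro {F : (Fin 3 → ℝ) → ℝ} (k a b c d e f : ℝ) (hk : 0 < k)
    (hne : ∃ x y z : ℝ, a*x^2+b*y^2+c*z^2+d*(x*y)+e*(x*z)+f*(y*z) ≠ 0)
    (h : ∀ x y z : ℝ, k*(a*x^2+b*y^2+c*z^2+d*(x*y)+e*(x*z)+f*(y*z))^2 ≤ F ![x,y,z]) :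
    Good F := by
  refine ⟨fun v => √k * (a*v 0^2+b*v 1^2+c*v 2^2+d*(v 0*v 1)+e*(v 0*v 2)+f*(v 1*v 2)),
    ⟨C √k * (C a*X 0^2+C b*X 1^2+C c*X 2^2+C d*(X 0*X 1)+C e*(X 0*X 2)+C f*(X 1*X 2)), ?_, ?_⟩,
    ?_, ?_⟩
  · apply IsHomogeneous.C_mul
    refine ((((IsHomogeneous.add ?_ ?_).add ?_).add ?_).add ?_).add ?_
    · exact isHomogeneous_C_mul_X_pow _ _ _
    · exact isHomogeneous_C_mul_X_pow _ _ _
    · exact isHomogeneous_C_mul_X_pow _ _ _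
    · exact ((isHomogeneous_X _ _).mul (isHomogeneous_X _ _)).C_mul _
    · exact ((isHomogeneous_X _ _).mul (isHomogeneous_X _ _)).C_mul _
    · exact ((isHomogeneous_X _ _).mul (isHomogeneous_X _ _)).C_mul _
  · intro v; simp
  · obtain ⟨x, y, z, h⟩ := hne
    refine ⟨![x,y,z], mul_ne_zero (Real.sqrt_pos.2 hk).ne' ?_⟩
    simpa using h
  · intro v
    have := h (v 0) (v 1) (v 2)
    have hv : ![v 0, v 1, v 2] = v := by ext i; fin_cases i <;> rfl
    rw [hv] at this
    rw [mul_pow, Real.sq_sqrt hk.le]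
    exact this

lemma hform_sum_induction {n : ℕ} (P : ((Fin 3 → ℝ) → ℝ) → Prop) (h0 : P (fun _ => 0))
    (hadd : ∀ F G, P F → P G → P (fun v => F v + G v))
    (hmon : ∀ (r : ℝ) (i j k : ℕ), i + j + k = n → P (fun v => r * (v 0 ^ i * v 1 ^ j * v 2 ^ k)))
    {F : (Fin 3 → ℝ) → ℝ} (hF : HForm n F) : P F := by
  obtain ⟨p, hp, hpe⟩ := hF
  have hFe : F = fun v => ∑ d ∈ p.support, p.coeff d * (v 0 ^ d 0 * v 1 ^ d 1 * v 2 ^ d 2) := by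
    funext v
    rw [hpe, eval_eq']
    simp [Fin.prod_univ_three]
  rw [hFe]
  have key : ∀ s : Finset (Fin 3 →₀ ℕ), s ⊆ p.support →
      P (fun v => ∑ d ∈ s, p.coeff d * (v 0 ^ d 0 * v 1 ^ d 1 * v 2 ^ d 2)) := by
    intro s
    classical
    induction s using Finset.induction_on with
    | empty => intro _; simpa using h0
    | insert d s hd ih =>
      intro hs
      simp only [Finset.sum_insert hd]
      refine hadd _ _ (hmon _ _ _ _ ?_) (ih fun x hx => hs (Finset.mem_insert_of_mem hx))
      have h1 := hp.degree_eq_sum_deg_support (hs (Finset.mem_insert_self d s))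
      rw [h1]
      change _ = Finsupp.degree d
      rw [Finsupp.degree_eq_sum, Fin.sum_univ_three]
  exact key _ subset_rfl

/-- monomials of degree 2 -/
def vm (v : Fin 3 → ℝ) : Fin 6 → ℝ :=
  ![v 0^2, v 1^2, v 2^2, v 0*v 1, v 0*v 2, v 1*v 2]

lemma hform2_coeffs {F : (Fin 3 → ℝ) → ℝ} (hF : HForm 2 F) :
    ∃ c : Fin 6 → ℝ, ∀ v, F v = ∑ i, c i * vm v i := by
  refine hform_sum_induction (n := 2)
    (fun F => ∃ c : Fin 6 → ℝ, ∀ v, F v = ∑ i, c i * vm v i) ⟨0, by simp⟩ ?_ ?_ hF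
  · rintro F G ⟨c, hc⟩ ⟨d, hd⟩
    refine ⟨c + d, fun v => ?_⟩
    simp only [hc, hd, Pi.add_apply, add_mul, Finset.sum_add_distrib]
  · intro r i j k h
    have hi : i ≤ 2 := by omega
    have hj : j ≤ 2 := by omega
    obtain rfl : k = 2 - i - j := by omega
    interval_cases i <;> interval_cases j <;> first | (exfalso; omega) | skip
    · exact ⟨![0,0,r,0,0,0], fun v => by simp [Fin.sum_univ_six, vm]⟩
    · exact ⟨![0,0,0,0,0,r], fun v => by simp [Fin.sum_univ_six, vm]⟩
    · exact ⟨![0,r,0,0,0,0], fun v => by simp [Fin.sum_univ_six, vm]⟩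
    · exact ⟨![0,0,0,0,r,0], fun v => by simp [Fin.sum_univ_six, vm]⟩
    · exact ⟨![0,0,0,r,0,0], fun v => by simp [Fin.sum_univ_six, vm]⟩
    · exact ⟨![r,0,0,0,0,0], fun v => by simp [Fin.sum_univ_six, vm]⟩

lemma hform4_coeffs {F : (Fin 3 → ℝ) → ℝ} (hF : HForm 4 F) :
    ∃ a b0 b1 c0 c1 c2 d0 d1 d2 d3 e0 e1 e2 e3 e4 : ℝ, ∀ v, F v =
      v 0^4 * a + v 0^3 * (b0 * v 1 + b1 * v 2)
      + v 0^2 * (c0 * v 1^2 + c1 * (v 1 * v 2) + c2 * v 2^2)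
      + 2 * v 0 * (d0 * v 1^3 + d1 * (v 1^2 * v 2) + d2 * (v 1 * v 2^2) + d3 * v 2^3)
      + (e0 * v 1^4 + e1 * (v 1^3 * v 2) + e2 * (v 1^2 * v 2^2) + e3 * (v 1 * v 2^3)
        + e4 * v 2^4) := by
  refine hform_sum_induction (n := 4) (fun F => ∃ a b0 b1 c0 c1 c2 d0 d1 d2 d3 e0 e1 e2 e3 e4 : ℝ,
      ∀ v, F v =
      v 0^4 * a + v 0^3 * (b0 * v 1 + b1 * v 2)
      + v 0^2 * (c0 * v 1^2 + c1 * (v 1 * v 2) + c2 * v 2^2)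
      + 2 * v 0 * (d0 * v 1^3 + d1 * (v 1^2 * v 2) + d2 * (v 1 * v 2^2) + d3 * v 2^3)
      + (e0 * v 1^4 + e1 * (v 1^3 * v 2) + e2 * (v 1^2 * v 2^2) + e3 * (v 1 * v 2^3)
        + e4 * v 2^4)) ⟨0,0,0,0,0,0,0,0,0,0,0,0,0,0,0, by simp⟩ ?_ ?_ hF
  · rintro F G ⟨a,b0,b1,c0,c1,c2,d0,d1,d2,d3,e0,e1,e2,e3,e4, h⟩
      ⟨a',b0',b1',c0',c1',c2',d0',d1',d2',d3',e0',e1',e2',e3',e4', h'⟩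
    refine ⟨a+a',b0+b0',b1+b1',c0+c0',c1+c1',c2+c2',d0+d0',d1+d1',d2+d2',d3+d3',
      e0+e0',e1+e1',e2+e2',e3+e3',e4+e4', fun v => ?_⟩
    change F v + G v = _
    rw [h, h']; ring
  · intro r i j k h
    have hi : i ≤ 4 := by omega
    have hj : j ≤ 4 := by omega
    obtain rfl : k = 4 - i - j := by omega
    interval_cases i <;> interval_cases j <;> first | (exfalso; omega) | skip
    · exact ⟨0,0,0,0,0,0,0,0,0,0,0,0,0,0,r, fun v => by norm_num⟩
    · exact ⟨0,0,0,0,0,0,0,0,0,0,0,0,0,r,0, fun v => by norm_num⟩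
    · exact ⟨0,0,0,0,0,0,0,0,0,0,0,0,r,0,0, fun v => by norm_num⟩
    · exact ⟨0,0,0,0,0,0,0,0,0,0,0,r,0,0,0, fun v => by norm_num⟩
    · exact ⟨0,0,0,0,0,0,0,0,0,0,r,0,0,0,0, fun v => by norm_num⟩
    · exact ⟨0,0,0,0,0,0,0,0,0,r/2,0,0,0,0,0, fun v => by norm_num; ring⟩
    · exact ⟨0,0,0,0,0,0,0,0,r/2,0,0,0,0,0,0, fun v => by norm_num; ring⟩
    · exact ⟨0,0,0,0,0,0,0,r/2,0,0,0,0,0,0,0, fun v => by norm_num; ring⟩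
    · exact ⟨0,0,0,0,0,0,r/2,0,0,0,0,0,0,0,0, fun v => by norm_num; ring⟩
    · exact ⟨0,0,0,0,0,r,0,0,0,0,0,0,0,0,0, fun v => by norm_num; ring⟩
    · exact ⟨0,0,0,0,r,0,0,0,0,0,0,0,0,0,0, fun v => by norm_num; ring⟩
    · exact ⟨0,0,0,r,0,0,0,0,0,0,0,0,0,0,0, fun v => by norm_num; ring⟩
    · exact ⟨0,0,r,0,0,0,0,0,0,0,0,0,0,0,0, fun v => by norm_num; ring⟩
    · exact ⟨0,r,0,0,0,0,0,0,0,0,0,0,0,0,0, fun v => by norm_num; ring⟩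
    · exact ⟨r,0,0,0,0,0,0,0,0,0,0,0,0,0,0, fun v => by norm_num; ring⟩

lemma nonneg_at_zero {φ : ℝ → ℝ} (hc : Continuous φ) (h : ∀ t, 0 < t → 0 ≤ φ t) : 0 ≤ φ 0 := by
  have h1 : Filter.Tendsto φ (nhdsWithin 0 (Set.Ioi 0)) (nhds (φ 0)) :=
    hc.continuousAt.continuousWithinAt
  exact ge_of_tendsto h1 (Filter.eventually_of_mem self_mem_nhdsWithin h)

lemma lin_coeff_zero (d a b c : ℝ) (h : ∀ t : ℝ, 0 ≤ t * d + t^2 * a + t^3 * b + t^4 * c) :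
    d = 0 := by
  apply le_antisymm
  · have := nonneg_at_zero (φ := fun t => -d + t * a - t^2 * b + t^3 * c) (by fun_prop) (by
      intro t ht
      have := h (-t)
      refine nonneg_of_mul_nonneg_right (?_ : 0 ≤ t * _) ht
      nlinarith)
    simpa using this
  · have := nonneg_at_zero (φ := fun t => d + t * a + t^2 * b + t^3 * c) (by fun_prop) (by
      intro t ht
      have := h t
      refine nonneg_of_mul_nonneg_right (?_ : 0 ≤ t * _) ht
      nlinarith)
    simpa using this

lemma disc_le {a b c : ℝ} (h : ∀ x : ℝ, 0 ≤ x^2 * a + 2 * x * b + c) : b^2 ≤ a * c := by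
  have := discrim_le_zero (a := a) (b := 2*b) (c := c) (fun x => by linarith [h x])
  rw [discrim] at this
  linarith

lemma ratio_bound {V : Type*} [NormedAddCommGroup V] [NormedSpace ℝ V] [FiniteDimensional ℝ V]
    (m : ℕ) (D E : V → ℝ) (hD : Continuous D) (hE : Continuous E)
    (hDh : ∀ (t : ℝ) v, D (t • v) = t^m * D v) (hEh : ∀ (t : ℝ) v, E (t • v) = t^m * E v)
    (hm : m ≠ 0) (hpos : ∀ v, v ≠ 0 → 0 < D v) : ∃ μ > 0, ∀ v, μ * E v ≤ D v := by
  have := FiniteDimensional.proper ℝ V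
  by_cases hne : (Metric.sphere (0:V) 1).Nonempty
  swap
  · refine ⟨1, one_pos, fun v => ?_⟩
    have hv : v = 0 := by
      by_contra hv
      exact hne ⟨‖v‖⁻¹ • v, by simp [norm_smul, hv]⟩
    have h1 := hDh 0 0
    have h2 := hEh 0 0
    simp [hm] at h1 h2
    simp [hv, h1, h2]
  obtain ⟨u, hu, hmin⟩ := (isCompact_sphere (0:V) 1).exists_isMinOn hne hD.continuousOn
  obtain ⟨w, hw, hmax⟩ := (isCompact_sphere (0:V) 1).exists_isMaxOn hne hE.continuousOn
  have hu0 : u ≠ 0 := by rintro rfl; simp at hu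
  have hDu := hpos u hu0
  refine ⟨D u / (|E w| + 1), by positivity, fun v => ?_⟩
  by_cases hv : v = 0
  · have h1 := hDh 0 0
    have h2 := hEh 0 0
    simp [hm] at h1 h2
    simp [hv, h1, h2]
  have hn : 0 < ‖v‖ := norm_pos_iff.2 hv
  have hs : ‖v‖⁻¹ • v ∈ Metric.sphere (0:V) 1 := by simp [norm_smul, hv]
  have hv' : v = ‖v‖ • (‖v‖⁻¹ • v) := by rw [smul_smul, mul_inv_cancel₀ hn.ne', one_smul]
  have h1 : D u ≤ D (‖v‖⁻¹ • v) := hmin hs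
  have h2 : E (‖v‖⁻¹ • v) ≤ E w := hmax hs
  rw [hv', hDh, hEh, mul_left_comm]
  refine mul_le_mul_of_nonneg_left ?_ (by positivity)
  rw [div_mul_eq_mul_div, div_le_iff₀ (by positivity)]
  have h3 : E (‖v‖⁻¹ • v) ≤ |E w| + 1 := by linarith [le_abs_self (E w)]
  calc D u * E (‖v‖⁻¹ • v) ≤ D u * (|E w| + 1) := by gcongr
    _ ≤ _ := by gcongr

lemma e1_normal {F : (Fin 3 → ℝ) → ℝ} (hF : HForm 4 F) (hpsd : ∀ v, 0 ≤ F v)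
    (h0 : F ![1,0,0] = 0) :
    ∃ c0 c1 c2 d0 d1 d2 d3 e0 e1 e2 e3 e4 : ℝ, ∀ x y z : ℝ, F ![x,y,z] =
      x^2 * (c0 * y^2 + c1 * (y * z) + c2 * z^2)
      + 2 * x * (d0 * y^3 + d1 * (y^2 * z) + d2 * (y * z^2) + d3 * z^3)
      + (e0 * y^4 + e1 * (y^3 * z) + e2 * (y^2 * z^2) + e3 * (y * z^3) + e4 * z^4) := by
  obtain ⟨a,b0,b1,c0,c1,c2,d0,d1,d2,d3,e0,e1,e2,e3,e4, h⟩ := hform4_coeffs hF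
  have ha : a = 0 := by
    rw [h] at h0
    simpa using h0
  have hb0 : b0 = 0 := by
    apply lin_coeff_zero b0 c0 (2*d0) e0
    intro t
    have := hpsd ![1,t,0]
    rw [h] at this
    simp [ha] at this
    linarith
  have hb1 : b1 = 0 := by
    apply lin_coeff_zero b1 c2 (2*d3) e4
    intro t
    have := hpsd ![1,0,t]
    rw [h] at this
    simp [ha] at this
    linarith
  refine ⟨c0,c1,c2,d0,d1,d2,d3,e0,e1,e2,e3,e4, fun x y z => ?_⟩
  rw [h]
  simp [ha, hb0, hb1]

lemma change_coords {F : (Fin 3 → ℝ) → ℝ} (hF : HForm 4 F) (hpsd : ∀ v, 0 ≤ F v) (hne : ∃ v, F v ≠ 0)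
    (s b c : ℝ) (hbc : ¬ (b = 0 ∧ c = 0)) :
    ∃ F' : (Fin 3 → ℝ) → ℝ, HForm 4 F' ∧ (∀ v, 0 ≤ F' v) ∧ (∃ v, F' v ≠ 0) ∧
      (∀ x y z : ℝ, F' ![x,y,z] = F ![x+s*y, b*y-c*z, c*y+b*z]) ∧ (Good F' → Good F) := by
  have hn : b^2 + c^2 ≠ 0 := by
    intro h
    exact hbc ⟨by nlinarith [sq_nonneg b, sq_nonneg c], by nlinarith [sq_nonneg b, sq_nonneg c]⟩
  let M : Matrix (Fin 3) (Fin 3) ℝ := !![1,s,0;0,b,-c;0,c,b]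
  have hdet : IsUnit M.det := by
    rw [isUnit_iff_ne_zero, Matrix.det_fin_three]
    simp [M]
    intro h
    apply hn
    linarith
  have hTS : ∀ v, Matrix.toLin' M (Matrix.toLin' M⁻¹ v) = v := by
    intro v
    simp [Matrix.mulVec_mulVec, Matrix.mul_nonsing_inv M hdet]
  have hST : ∀ v, Matrix.toLin' M⁻¹ (Matrix.toLin' M v) = v := by
    intro v
    simp [Matrix.mulVec_mulVec, Matrix.nonsing_inv_mul M hdet]
  refine ⟨fun v => F (Matrix.toLin' M v), hF.comp _, fun v => hpsd _, ?_, ?_,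
    Good.of_comp _ _ hTS hST⟩
  · obtain ⟨v, hv⟩ := hne
    refine ⟨Matrix.toLin' M⁻¹ v, ?_⟩
    change F _ ≠ 0
    rwa [hTS]
  · intro x y z
    have : Matrix.toLin' M ![x,y,z] = ![x+s*y, b*y-c*z, c*y+b*z] := by
      ext i
      fin_cases i <;> simp [M, Matrix.mulVec, dotProduct, Fin.sum_univ_three] <;> ring
    change F _ = F _
    rw [this]

lemma shear {F : (Fin 3 → ℝ) → ℝ} (α : ℝ)
    (h : Good (fun v => F ![v 0 + α * v 2, v 1, v 2])) : Good F := by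
  let M : Matrix (Fin 3) (Fin 3) ℝ := !![1,0,α;0,1,0;0,0,1]
  let N : Matrix (Fin 3) (Fin 3) ℝ := !![1,0,-α;0,1,0;0,0,1]
  refine Good.of_comp (Matrix.toLin' M) (Matrix.toLin' N) ?_ ?_ ?_
  · intro v
    ext i
    fin_cases i <;> simp [M, N, Matrix.mulVec, dotProduct, Fin.sum_univ_three]
  · intro v
    ext i
    fin_cases i <;> simp [M, N, Matrix.mulVec, dotProduct, Fin.sum_univ_three]
  · convert h using 3 with v
    ext i
    fin_cases i <;> simp [M, Matrix.mulVec, dotProduct, Fin.sum_univ_three]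

lemma lead_nonneg {a b c : ℝ} (h : ∀ x : ℝ, 0 ≤ x^2 * a + 2 * x * b + c) : 0 ≤ a := by
  have := nonneg_at_zero (φ := fun t => a + 2 * t * b + t^2 * c) (by fun_prop) (by
    intro t ht
    have := mul_nonneg (sq_nonneg t) (h (1/t))
    field_simp at this
    linarith)
  simpa using this

/-- case: Hessian of rank one at the zero `e₁` -/
lemma caseB1 {F : (Fin 3 → ℝ) → ℝ} (hpsd : ∀ v, 0 ≤ F v)
    (c2 d0 d1 d2 d3 e0 e1 e2 e3 e4 : ℝ) (hc : 0 < c2)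
    (h : ∀ x y z : ℝ, F ![x,y,z] =
      x^2 * (c2 * z^2)
      + 2 * x * (d0 * y^3 + d1 * (y^2 * z) + d2 * (y * z^2) + d3 * z^3)
      + (e0 * y^4 + e1 * (y^3 * z) + e2 * (y^2 * z^2) + e3 * (y * z^3) + e4 * z^4)) : Good F := by
  have hdisc := fun y z : ℝ => disc_le (fun x => (h x y z) ▸ hpsd ![x,y,z])
  have hd0 : d0 = 0 := by
    have := hdisc 1 0
    simp at this
    nlinarith
  have hk : ∀ y z : ℝ, 0 ≤ c2 * (e0 * y^4 + e1 * (y^3 * z) + e2 * (y^2 * z^2) + e3 * (y * z^3)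
      + e4 * z^4) - (d1 * y^2 + d2 * (y * z) + d3 * z^2)^2 := by
    have hk' : ∀ y z : ℝ, z ≠ 0 → 0 ≤ c2 * (e0 * y^4 + e1 * (y^3 * z) + e2 * (y^2 * z^2)
      + e3 * (y * z^3) + e4 * z^4) - (d1 * y^2 + d2 * (y * z) + d3 * z^2)^2 := by
      intro y z hz
      have h1 := hdisc y z
      have h2 : 0 < z^2 := by positivity
      refine nonneg_of_mul_nonneg_right (?_ : 0 ≤ z^2 * _) h2
      rw [hd0] at h1
      linarith
    intro y z
    by_cases hz : z = 0
    · subst hz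
      exact nonneg_at_zero (φ := fun z => c2 * (e0 * y^4 + e1 * (y^3 * z) + e2 * (y^2 * z^2)
        + e3 * (y * z^3) + e4 * z^4) - (d1 * y^2 + d2 * (y * z) + d3 * z^2)^2) (by fun_prop)
        (fun t ht => hk' y t ht.ne')
    · exact hk' y z hz
  refine good_intro (1/c2) 0 d1 d3 0 c2 d2 (by positivity) ?_ ?_
  · by_cases hd3 : d3 = 0
    · exact ⟨1,0,1, by simp [hd3, hc.ne']⟩
    · exact ⟨0,0,1, by simpa using hd3⟩
  · intro x y z
    rw [h, hd0, div_mul_eq_mul_div, div_le_iff₀ hc]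
    linarith [hk y z]

/-- case: a binary form -/
lemma caseB0 {F : (Fin 3 → ℝ) → ℝ} (hF : HForm 4 F) (hpsd : ∀ v, 0 ≤ F v) (hne : ∃ v, F v ≠ 0)
    (h : ∀ x y z : ℝ, F ![x,y,z] = F ![0,y,z]) : Good F := by
  have h100 : ∀ {F : (Fin 3 → ℝ) → ℝ}, HForm 4 F → (∀ x y z : ℝ, F ![x,y,z] = F ![0,y,z]) →
      F ![1,0,0] = 0 := by
    intro F hF h
    rw [h]
    obtain ⟨a,b0,b1,c0,c1,c2,d0,d1,d2,d3,e0,e1,e2,e3,e4, h⟩ := hform4_coeffs hF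
    rw [h]; simp
  obtain ⟨c0,c1,c2,d0,d1,d2,d3,e0,e1,e2,e3,e4, hc⟩ := e1_normal hF hpsd (h100 hF h)
  by_cases hz : ∀ p : ℝ × ℝ, p ≠ 0 → 0 < e0 * p.1^4 + e1 * (p.1^3 * p.2) + e2 * (p.1^2 * p.2^2)
      + e3 * (p.1 * p.2^3) + e4 * p.2^4
  · obtain ⟨μ, hμ, hle⟩ := ratio_bound 4 (fun p : ℝ × ℝ => e0 * p.1^4 + e1 * (p.1^3 * p.2)
      + e2 * (p.1^2 * p.2^2) + e3 * (p.1 * p.2^3) + e4 * p.2^4) (fun p => p.2^4)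
      (by fun_prop) (by fun_prop) (by intro t v; simp; ring) (by intro t v; simp; ring)
      (by norm_num) hz
    refine good_intro μ 0 0 1 0 0 0 hμ ⟨0,0,1, by simp⟩ ?_
    intro x y z
    rw [h, hc]
    have := hle (y, z)
    simp only at this
    linarith
  push Not at hz
  obtain ⟨⟨b, c⟩, hbc, hz⟩ := hz
  have hbc' : ¬ (b = 0 ∧ c = 0) := by rintro ⟨rfl, rfl⟩; exact hbc rfl
  obtain ⟨F', hF', hpsd', hne', hFF', hgood⟩ := change_coords hF hpsd hne 0 b c hbc'
  apply hgood
  have h' : ∀ x y z : ℝ, F' ![x,y,z] = F' ![0,y,z] := by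
    intro x y z
    rw [hFF', hFF', h]
    symm
    rw [h]
  obtain ⟨c0',c1',c2',d0',d1',d2',d3',e0',e1',e2',e3',e4', hc'⟩ :=
    e1_normal hF' hpsd' (h100 hF' h')
  have h0 : F' ![0,1,0] = 0 := by
    apply le_antisymm _ (hpsd' _)
    rw [hFF', h, hc]
    simp only at hz
    simpa using hz
  have he0 : e0' = 0 := by
    rw [hc'] at h0
    simpa using h0
  have he1 : e1' = 0 := by
    apply lin_coeff_zero e1' e2' e3' e4'
    intro t
    have := hpsd' ![0,1,t]
    rw [hc'] at this
    simp [he0] at this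
    linarith
  have hq : ∀ y : ℝ, 0 ≤ y^2 * e2' + 2 * y * (e3'/2) + e4' := by
    intro y
    have := hpsd' ![0,y,1]
    rw [hc'] at this
    simp [he0, he1] at this
    linarith
  have hl := lead_nonneg hq
  have hd := disc_le hq
  rcases hl.eq_or_lt with hl | hl
  · have he3 : e3' = 0 := by rw [← hl] at hd; nlinarith
    have he4 : 0 ≤ e4' := by simpa using hq 0
    rcases he4.eq_or_lt with he4 | he4
    · obtain ⟨v, hv⟩ := hne'
      exfalso
      apply hv
      have hv' : ![v 0, v 1, v 2] = v := by ext i; fin_cases i <;> rfl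
      rw [← hv', h', hc', he0, he1, ← hl, he3, ← he4]
      simp
    · refine good_intro e4' 0 0 1 0 0 0 he4 ⟨0,0,1, by simp⟩ ?_
      intro x y z
      rw [h', hc', he0, he1, ← hl, he3]
      linarith
  · refine good_intro (1/e2') 0 0 (e3'/2) 0 0 e2' (by positivity) ?_ ?_
    · by_cases he3 : e3' = 0
      · exact ⟨0,1,1, by simp [he3, hl.ne']⟩
      · exact ⟨0,0,1, by simpa using he3⟩
    · intro x y z
      rw [h', hc', he0, he1, div_mul_eq_mul_div, div_le_iff₀ hl]
      have : 0 ≤ z^4 * (e2' * e4' - (e3'/2)^2) := mul_nonneg (by positivity) (by linarith)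
      nlinarith

lemma degenerate {F : (Fin 3 → ℝ) → ℝ} (hF : HForm 4 F) (hpsd : ∀ v, 0 ≤ F v)
    (hne : ∃ v, F v ≠ 0) (c0 c1 c2 d0 d1 d2 d3 e0 e1 e2 e3 e4 : ℝ)
    (h : ∀ x y z : ℝ, F ![x,y,z] =
      x^2 * (c0 * y^2 + c1 * (y * z) + c2 * z^2)
      + 2 * x * (d0 * y^3 + d1 * (y^2 * z) + d2 * (y * z^2) + d3 * z^3)
      + (e0 * y^4 + e1 * (y^3 * z) + e2 * (y^2 * z^2) + e3 * (y * z^3) + e4 * z^4))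
    (b c : ℝ) (hbc : ¬ (b = 0 ∧ c = 0)) (hz : c0 * b^2 + c1 * (b * c) + c2 * c^2 = 0) : Good F := by
  obtain ⟨F', hF', hpsd', hne', hFF', hgood⟩ := change_coords hF hpsd hne 0 b c hbc
  apply hgood
  have h0 : F' ![1,0,0] = 0 := by
    rw [hFF', h]; simp
  obtain ⟨c0',c1',c2',d0',d1',d2',d3',e0',e1',e2',e3',e4', hc'⟩ := e1_normal hF' hpsd' h0
  have hc0 : c0' = 0 := by
    have i1 := (hFF' 1 1 0).symm.trans (hc' 1 1 0)
    have i2 := (hFF' (-1) 1 0).symm.trans (hc' (-1) 1 0)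
    have i3 := (hFF' 0 1 0).symm.trans (hc' 0 1 0)
    rw [h] at i1 i2 i3
    simp at i1 i2 i3
    linarith
  have hfnn : ∀ y z : ℝ, 0 ≤ c0' * y^2 + c1' * (y * z) + c2' * z^2 := fun y z =>
    lead_nonneg (fun x => (hc' x y z) ▸ hpsd' ![x,y,z])
  have hdisc := fun y z : ℝ => disc_le (fun x => (hc' x y z) ▸ hpsd' ![x,y,z])
  have hc1 : c1' = 0 := by
    apply lin_coeff_zero c1' c2' 0 0
    intro t
    have := hfnn 1 t
    rw [hc0] at this
    linarith
  have hc2 : 0 ≤ c2' := by simpa using hfnn 0 1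
  rcases hc2.eq_or_lt with hc2 | hc2
  · apply caseB0 hF' hpsd' hne'
    intro x y z
    have := hdisc y z
    rw [hc0, hc1, ← hc2] at this
    have hg : d0' * y^3 + d1' * (y^2 * z) + d2' * (y * z^2) + d3' * z^3 = 0 := by
      apply pow_eq_zero_iff (two_ne_zero) |>.1
      apply le_antisymm _ (sq_nonneg _)
      linarith
    rw [hc', hc', hg, hc0, hc1, ← hc2]
    ring
  · refine caseB1 hpsd' c2' d0' d1' d2' d3' e0' e1' e2' e3' e4' hc2 ?_
    intro x y z
    rw [hc', hc0, hc1]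
    ring

/-- final subcase: a third zero -/
lemma threezeros {F : (Fin 3 → ℝ) → ℝ} (f0 f1 f2 g0 g1 g2 h0 h1 h2 b c : ℝ)
    (h : ∀ x y z : ℝ, F ![x,y,z] =
      x^2 * (f0 * y^2 + f1 * (y * z) + f2 * z^2)
      + 2 * x * z * (g0 * y^2 + g1 * (y * z) + g2 * z^2)
      + z^2 * (h0 * y^2 + h1 * (y * z) + h2 * z^2))
    (hbc : ¬ (b = 0 ∧ c = 0)) (hf0 : 0 < f0)
    (hf : ∀ y z : ℝ, 0 ≤ f0 * y^2 + f1 * (y * z) + f2 * z^2)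
    (hh : ∀ y z : ℝ, 0 ≤ h0 * y^2 + h1 * (y * z) + h2 * z^2)
    (hD : ∀ y z : ℝ, (g0 * y^2 + g1 * (y * z) + g2 * z^2)^2 ≤
      (f0 * y^2 + f1 * (y * z) + f2 * z^2) * (h0 * y^2 + h1 * (y * z) + h2 * z^2))
    (hhz : h0 * b^2 + h1 * (b * c) + h2 * c^2 = 0)
    (hgz : g0 * b^2 + g1 * (b * c) + g2 * c^2 = 0) : Good F := by
  have hn : 0 < b^2 + c^2 := by
    by_contra hcon
    exact hbc ⟨by nlinarith [sq_nonneg b, sq_nonneg c], by nlinarith [sq_nonneg b, sq_nonneg c]⟩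
  have gr1 : 2 * h0 * b + h1 * c = 0 := by
    apply lin_coeff_zero _ h0 0 0
    intro t
    linarith [hh (b + t) c]
  have gr2 : h1 * b + 2 * h2 * c = 0 := by
    apply lin_coeff_zero _ h2 0 0
    intro t
    linarith [hh b (c + t)]
  obtain ⟨k, rfl, rfl, rfl⟩ : ∃ k, h0 = k * c^2 ∧ h1 = -2 * k * b * c ∧ h2 = k * b^2 := by
    refine ⟨(h0 + h2) / (b^2 + c^2), ?_, ?_, ?_⟩
    · field_simp
      linear_combination (b / 2) * gr1 - (c / 2) * gr2
    · field_simp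
      linear_combination b * gr2 + c * gr1
    · field_simp
      linear_combination (c / 2) * gr2 - (b / 2) * gr1
  obtain ⟨m, n, rfl, rfl, rfl⟩ : ∃ m n, g0 = c * m ∧ g1 = c * n - b * m ∧ g2 = - b * n := by
    by_cases hc : c = 0
    · have hb : b ≠ 0 := fun hb => hbc ⟨hb, hc⟩
      subst hc
      refine ⟨-g1/b, -g2/b, ?_, ?_, ?_⟩
      · have : g0 * b^2 = 0 := by linarith
        simpa [hb] using this
      · field_simp; ring
      · field_simp
    · refine ⟨g0 / c, (g1 + b * (g0 / c)) / c, ?_, ?_, ?_⟩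
      · field_simp
      · field_simp; ring
      · field_simp
        linear_combination hgz
  have hk : 0 ≤ k := by
    have e : 0 ≤ (b^2 + c^2)^2 * k := by linarith [hh c (-b)]
    exact nonneg_of_mul_nonneg_right e (by positivity)
  rcases hk.eq_or_lt with hk | hk
  · subst hk
    have hd : f1^2 ≤ 4 * f0 * f2 := by
      have := disc_le (a := f0) (b := f1/2) (c := f2) (fun x => by linarith [hf x 1])
      linarith
    have hg : ∀ y z, c * m * y^2 + (c * n - b * m) * (y * z) + -b * n * z^2 = 0 := by
      intro y z
      apply pow_eq_zero_iff (two_ne_zero) |>.1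
      apply le_antisymm _ (sq_nonneg _)
      linarith [hD y z]
    refine good_intro (1/f0) 0 0 0 f0 (f1/2) 0 (by positivity) ⟨1,1,0, by simp [hf0.ne']⟩ ?_
    intro x y z
    rw [h, hg, div_mul_eq_mul_div, div_le_iff₀ hf0]
    have : 0 ≤ x^2 * z^2 * (4 * f0 * f2 - f1^2) := mul_nonneg (by positivity) (by linarith)
    nlinarith
  · have hkf' : ∀ y z, c * y - b * z ≠ 0 →
        0 ≤ k * (f0 * y^2 + f1 * (y * z) + f2 * z^2) - (m * y + n * z)^2 := by
      intro y z hl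
      have h2 : 0 < (c * y - b * z)^2 := by positivity
      refine nonneg_of_mul_nonneg_right (?_ : 0 ≤ (c * y - b * z)^2 * _) h2
      linarith [hD y z]
    have hkf : ∀ y z, 0 ≤ k * (f0 * y^2 + f1 * (y * z) + f2 * z^2) - (m * y + n * z)^2 := by
      intro y z
      by_cases hl : c * y - b * z = 0
      · have := nonneg_at_zero (φ := fun t => k * (f0 * (y + t * c)^2 + f1 * ((y + t * c)
          * (z - t * b)) + f2 * (z - t * b)^2) - (m * (y + t * c) + n * (z - t * b))^2)
          (by fun_prop) (fun t ht => hkf' _ _ (by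
            have : c * (y + t * c) - b * (z - t * b) = t * (b^2 + c^2) := by
              linear_combination hl
            rw [this]
            positivity))
        simpa using this
      · exact hkf' y z hl
    refine good_intro (1/k) 0 0 (-k*b) m n (k*c) (by positivity) ?_ ?_
    · by_cases hb : b = 0
      · have hc : c ≠ 0 := fun hc => hbc ⟨hb, hc⟩
        exact ⟨0,1,1, by simp [hb, hc, hk.ne']⟩
      · exact ⟨0,0,1, by simp [hb, hk.ne']⟩
    · intro x y z
      rw [h, div_mul_eq_mul_div, div_le_iff₀ hk]
      have := mul_nonneg (sq_nonneg x) (hkf y z)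
      linarith

lemma twozeros {F : (Fin 3 → ℝ) → ℝ} (hF : HForm 4 F) (hpsd : ∀ v, 0 ≤ F v)
    (hne : ∃ v, F v ≠ 0) (hz1 : F ![1,0,0] = 0) (hz2 : F ![0,1,0] = 0) : Good F := by
  obtain ⟨f0,f1,f2,d0,g0,g1,g2,e0,e1,h0,h1,h2, h⟩ := e1_normal hF hpsd hz1
  by_cases hdeg : ∃ b c : ℝ, ¬ (b = 0 ∧ c = 0) ∧ f0 * b^2 + f1 * (b * c) + f2 * c^2 = 0
  · obtain ⟨b, c, hbc, hz⟩ := hdeg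
    exact degenerate hF hpsd hne _ _ _ _ _ _ _ _ _ _ _ _ h b c hbc hz
  have he0 : e0 = 0 := by
    rw [h] at hz2
    simpa using hz2
  have he1 : e1 = 0 := by
    apply lin_coeff_zero e1 h0 h1 h2
    intro t
    have := hpsd ![0,1,t]
    rw [h] at this
    simp [he0] at this
    linarith
  have hd0 : d0 = 0 := by
    have : 2 * d0 = 0 := by
      apply lin_coeff_zero (2*d0) f0 0 0
      intro t
      have := hpsd ![t,1,0]
      rw [h] at this
      simp [he0] at this
      linarith
    linarith
  subst he0 he1 hd0
  have hfnn : ∀ y z : ℝ, 0 ≤ f0 * y^2 + f1 * (y * z) + f2 * z^2 := fun y z =>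
    lead_nonneg (fun x => (h x y z) ▸ hpsd ![x,y,z])
  have hfpos : ∀ y z : ℝ, ¬ (y = 0 ∧ z = 0) → 0 < f0 * y^2 + f1 * (y * z) + f2 * z^2 :=
    fun y z hyz => lt_of_le_of_ne (hfnn y z) (fun hh => hdeg ⟨y, z, hyz, hh.symm⟩)
  have hdisc := fun y z : ℝ => disc_le (fun x => (h x y z) ▸ hpsd ![x,y,z])
  have hD' : ∀ y z : ℝ, z ≠ 0 → 0 ≤
      (f0 * y^2 + f1 * (y * z) + f2 * z^2) * (h0 * y^2 + h1 * (y * z) + h2 * z^2) -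
      (g0 * y^2 + g1 * (y * z) + g2 * z^2)^2 := by
    intro y z hz
    have i2 : 0 < z^2 := by positivity
    refine nonneg_of_mul_nonneg_right (?_ : 0 ≤ z^2 * _) i2
    linarith [hdisc y z]
  have hD : ∀ y z : ℝ, 0 ≤
      (f0 * y^2 + f1 * (y * z) + f2 * z^2) * (h0 * y^2 + h1 * (y * z) + h2 * z^2) -
      (g0 * y^2 + g1 * (y * z) + g2 * z^2)^2 := by
    intro y z
    by_cases hz : z = 0
    · subst hz
      exact nonneg_at_zero (φ := fun z =>
        (f0 * y^2 + f1 * (y * z) + f2 * z^2) * (h0 * y^2 + h1 * (y * z) + h2 * z^2) -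
        (g0 * y^2 + g1 * (y * z) + g2 * z^2)^2) (by fun_prop) (fun t ht => hD' y t ht.ne')
    · exact hD' y z hz
  by_cases hz : ∀ p : ℝ × ℝ, p ≠ 0 → 0 <
      (f0 * p.1^2 + f1 * (p.1 * p.2) + f2 * p.2^2) * (h0 * p.1^2 + h1 * (p.1 * p.2) + h2 * p.2^2) -
      (g0 * p.1^2 + g1 * (p.1 * p.2) + g2 * p.2^2)^2
  · obtain ⟨μ, hμ, hle⟩ := ratio_bound 4 (fun p : ℝ × ℝ =>
      (f0 * p.1^2 + f1 * (p.1 * p.2) + f2 * p.2^2) * (h0 * p.1^2 + h1 * (p.1 * p.2) + h2 * p.2^2) -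
      (g0 * p.1^2 + g1 * (p.1 * p.2) + g2 * p.2^2)^2)
      (fun p => (f0 * p.1^2 + f1 * (p.1 * p.2) + f2 * p.2^2) * p.2^2)
      (by fun_prop) (by fun_prop) (by intro t v; simp; ring) (by intro t v; simp; ring)
      (by norm_num) hz
    refine good_intro μ 0 0 1 0 0 0 hμ ⟨0,0,1, by simp⟩ ?_
    intro x y z
    by_cases hyz : y = 0 ∧ z = 0
    · obtain ⟨rfl, rfl⟩ := hyz
      simpa using hpsd ![x,0,0]
    have hp := hfpos y z hyz
    refine le_of_mul_le_mul_left ?_ hp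
    rw [h]
    have := mul_le_mul_of_nonneg_left (hle (y, z)) (sq_nonneg z)
    simp only at this
    have i3 := sq_nonneg (x * (f0 * y^2 + f1 * (y * z) + f2 * z^2)
      + z * (g0 * y^2 + g1 * (y * z) + g2 * z^2))
    linarith
  push Not at hz
  obtain ⟨⟨b, c⟩, hbc, hz⟩ := hz
  have hbc' : ¬ (b = 0 ∧ c = 0) := by rintro ⟨rfl, rfl⟩; exact hbc rfl
  have hp := hfpos b c hbc'
  simp only at hz
  obtain ⟨α, hα⟩ : ∃ α, α * (f0 * b^2 + f1 * (b * c) + f2 * c^2) =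
      -(g0 * b^2 + g1 * (b * c) + g2 * c^2) :=
    ⟨-(g0 * b^2 + g1 * (b * c) + g2 * c^2) / (f0 * b^2 + f1 * (b * c) + f2 * c^2),
      div_mul_cancel₀ _ hp.ne'⟩
  apply shear α
  have hD2 := le_antisymm hz (hD b c)
  refine threezeros f0 f1 f2 (g0 + α * f0) (g1 + α * f1) (g2 + α * f2)
    (h0 + 2 * α * g0 + α^2 * f0) (h1 + 2 * α * g1 + α^2 * f1) (h2 + 2 * α * g2 + α^2 * f2) b c
    ?_ hbc' (by simpa using hfpos 1 0 (by simp)) hfnn ?_ ?_ ?_ ?_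
  · intro x y z
    simp [h]
    ring
  · intro y z
    by_cases hyz : y = 0 ∧ z = 0
    · obtain ⟨rfl, rfl⟩ := hyz
      simp
    have hp := hfpos y z hyz
    refine nonneg_of_mul_nonneg_right (?_ : 0 ≤ (f0 * y^2 + f1 * (y * z) + f2 * z^2) * _) hp
    have := hD y z
    have i3 := sq_nonneg (α * (f0 * y^2 + f1 * (y * z) + f2 * z^2)
      + (g0 * y^2 + g1 * (y * z) + g2 * z^2))
    linarith
  · intro y z
    linarith [hD y z]
  · have : (f0 * b^2 + f1 * (b * c) + f2 * c^2) * ((h0 + 2 * α * g0 + α^2 * f0) * b^2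
        + (h1 + 2 * α * g1 + α^2 * f1) * (b * c) + (h2 + 2 * α * g2 + α^2 * f2) * c^2) = 0 := by
      linear_combination hD2 + (α * (f0 * b^2 + f1 * (b * c) + f2 * c^2) +
        (g0 * b^2 + g1 * (b * c) + g2 * c^2)) * hα
    exact (mul_eq_zero.1 this).resolve_left hp.ne'
  · linear_combination hα

lemma onezero {F : (Fin 3 → ℝ) → ℝ} (hF : HForm 4 F) (hpsd : ∀ v, 0 ≤ F v)
    (hne : ∃ v, F v ≠ 0) (h1 : F ![1,0,0] = 0) : Good F := by
  obtain ⟨c0,c1,c2,d0,d1,d2,d3,e0,e1,e2,e3,e4, h⟩ := e1_normal hF hpsd h1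
  by_cases hdeg : ∃ b c : ℝ, ¬ (b = 0 ∧ c = 0) ∧ c0 * b^2 + c1 * (b * c) + c2 * c^2 = 0
  · obtain ⟨b, c, hbc, hz⟩ := hdeg
    exact degenerate hF hpsd hne _ _ _ _ _ _ _ _ _ _ _ _ h b c hbc hz
  have hfnn : ∀ y z : ℝ, 0 ≤ c0 * y^2 + c1 * (y * z) + c2 * z^2 := fun y z =>
    lead_nonneg (fun x => (h x y z) ▸ hpsd ![x,y,z])
  have hfpos : ∀ y z : ℝ, ¬ (y = 0 ∧ z = 0) → 0 < c0 * y^2 + c1 * (y * z) + c2 * z^2 :=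
    fun y z hyz => lt_of_le_of_ne (hfnn y z) (fun hh => hdeg ⟨y, z, hyz, hh.symm⟩)
  by_cases hz : ∀ p : ℝ × ℝ, p ≠ 0 → 0 <
      (c0 * p.1^2 + c1 * (p.1 * p.2) + c2 * p.2^2) * (e0 * p.1^4 + e1 * (p.1^3 * p.2)
        + e2 * (p.1^2 * p.2^2) + e3 * (p.1 * p.2^3) + e4 * p.2^4) -
      (d0 * p.1^3 + d1 * (p.1^2 * p.2) + d2 * (p.1 * p.2^2) + d3 * p.2^3)^2
  · obtain ⟨μ, hμ, hle⟩ := ratio_bound 6 (fun p : ℝ × ℝ =>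
      (c0 * p.1^2 + c1 * (p.1 * p.2) + c2 * p.2^2) * (e0 * p.1^4 + e1 * (p.1^3 * p.2)
        + e2 * (p.1^2 * p.2^2) + e3 * (p.1 * p.2^3) + e4 * p.2^4) -
      (d0 * p.1^3 + d1 * (p.1^2 * p.2) + d2 * (p.1 * p.2^2) + d3 * p.2^3)^2)
      (fun p => (c0 * p.1^2 + c1 * (p.1 * p.2) + c2 * p.2^2) * p.2^4)
      (by fun_prop) (by fun_prop) (by intro t v; simp; ring) (by intro t v; simp; ring)
      (by norm_num) hz
    refine good_intro μ 0 0 1 0 0 0 hμ ⟨0,0,1, by simp⟩ ?_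
    intro x y z
    by_cases hyz : y = 0 ∧ z = 0
    · obtain ⟨rfl, rfl⟩ := hyz
      simpa using hpsd ![x,0,0]
    have hp := hfpos y z hyz
    refine le_of_mul_le_mul_left ?_ hp
    rw [h]
    have := hle (y, z)
    simp only at this
    have i3 := sq_nonneg (x * (c0 * y^2 + c1 * (y * z) + c2 * z^2)
      + (d0 * y^3 + d1 * (y^2 * z) + d2 * (y * z^2) + d3 * z^3))
    linarith
  push Not at hz
  obtain ⟨⟨b, c⟩, hbc, hz⟩ := hz
  have hbc' : ¬ (b = 0 ∧ c = 0) := by rintro ⟨rfl, rfl⟩; exact hbc rfl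
  have hp := hfpos b c hbc'
  simp only at hz
  obtain ⟨s, hs⟩ : ∃ s, s * (c0 * b^2 + c1 * (b * c) + c2 * c^2) =
      -(d0 * b^3 + d1 * (b^2 * c) + d2 * (b * c^2) + d3 * c^3) :=
    ⟨-(d0 * b^3 + d1 * (b^2 * c) + d2 * (b * c^2) + d3 * c^3) /
      (c0 * b^2 + c1 * (b * c) + c2 * c^2), div_mul_cancel₀ _ hp.ne'⟩
  obtain ⟨F', hF', hpsd', hne', hFF', hgood⟩ := change_coords hF hpsd hne s b c hbc'
  apply hgood
  apply twozeros hF' hpsd' hne'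
  · rw [hFF']
    simpa using h1
  · apply le_antisymm _ (hpsd' _)
    rw [hFF', h]
    simp only [mul_one, mul_zero, sub_zero, add_zero, zero_add]
    refine le_of_mul_le_mul_left ?_ hp
    have e : (s * (c0 * b^2 + c1 * (b * c) + c2 * c^2) +
      (d0 * b^3 + d1 * (b^2 * c) + d2 * (b * c^2) + d3 * c^3))^2 = 0 := by rw [hs]; ring
    linarith

lemma good_of_psd {F : (Fin 3 → ℝ) → ℝ} (hF : HForm 4 F) (hpsd : ∀ v, 0 ≤ F v)
    (hne : ∃ v, F v ≠ 0) : Good F := by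
  by_cases hz : ∀ v, v ≠ 0 → 0 < F v
  · obtain ⟨a,b0,b1,c0,c1,c2,d0,d1,d2,d3,e0,e1,e2,e3,e4, h⟩ := hform4_coeffs hF
    have hcont : Continuous F := by
      rw [funext h]
      fun_prop
    obtain ⟨μ, hμ, hle⟩ := ratio_bound 4 F (fun v => v 2^4) hcont (by fun_prop)
      (by intro t v; rw [h, h]; simp; ring) (by intro t v; simp; ring) (by norm_num) hz
    refine good_intro μ 0 0 1 0 0 0 hμ ⟨0,0,1, by simp⟩ ?_
    intro x y z
    have := hle ![x,y,z]
    simp at this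
    linarith
  push Not at hz
  obtain ⟨P, hP, hFP⟩ := hz
  have he : (![1,0,0] : Fin 3 → ℝ) ≠ 0 := by
    intro h
    simpa using congrFun h 0
  obtain ⟨A, hA⟩ := SeparatingDual.exists_continuousLinearEquiv_apply_eq (R := ℝ) he hP
  refine Good.of_comp (A.toLinearEquiv : (Fin 3 → ℝ) →ₗ[ℝ] (Fin 3 → ℝ))
    (A.symm.toLinearEquiv : (Fin 3 → ℝ) →ₗ[ℝ] (Fin 3 → ℝ)) (by simp) (by simp) ?_
  apply onezero (hF.comp _) (fun v => hpsd _)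
  · obtain ⟨v, hv⟩ := hne
    exact ⟨A.symm v, by simpa using hv⟩
  · have : F (A ![1,0,0]) = 0 := by
      rw [hA]
      exact le_antisymm hFP (hpsd _)
    simpa using this

/-- sum of six squares of quadratic forms with coefficient rows `B i` -/
def sos (B : Fin 6 → Fin 6 → ℝ) (v : Fin 3 → ℝ) : ℝ := ∑ i, (∑ j, B i j * vm v j) ^ 2

lemma sos_eq (B : Fin 6 → Fin 6 → ℝ) (v : Fin 3 → ℝ) :
    sos B v = vm v ⬝ᵥ (((Matrix.of B).transpose * Matrix.of B).mulVec (vm v)) := by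
  rw [← Matrix.mulVec_mulVec, Matrix.dotProduct_mulVec, Matrix.vecMul_transpose]
  simp [sos, dotProduct, Matrix.mulVec, sq]

open scoped MatrixOrder in
lemma add_square (B : Fin 6 → Fin 6 → ℝ) (c : Fin 6 → ℝ) :
    ∃ B' : Fin 6 → Fin 6 → ℝ, (∀ v, sos B' v = sos B v + (∑ j, c j * vm v j) ^ 2) ∧
      ∑ i, ∑ j, B' i j ^ 2 = ∑ i, ∑ j, B i j ^ 2 + ∑ j, c j ^ 2 := by
  have hpos : ((Matrix.of B).conjTranspose * Matrix.of B
      + Matrix.vecMulVec c (star c)).PosSemidef :=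
    (Matrix.posSemidef_conjTranspose_mul_self _).add (Matrix.posSemidef_vecMulVec_self_star c)
  obtain ⟨B', hB'⟩ := CStarAlgebra.nonneg_iff_eq_star_mul_self.1 hpos.nonneg
  rw [Matrix.star_eq_conjTranspose, Matrix.conjTranspose_eq_transpose_of_trivial,
    Matrix.conjTranspose_eq_transpose_of_trivial] at hB'
  refine ⟨fun i j => B' i j, fun v => ?_, ?_⟩
  · rw [sos_eq, sos_eq]
    have hof : (Matrix.of fun i j => B' i j) = B' := rfl
    rw [hof, ← hB', Matrix.add_mulVec, dotProduct_add]
    congr 1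
    simp only [dotProduct, Matrix.mulVec, Matrix.vecMulVec_apply, star_trivial]
    rw [sq, Finset.sum_mul_sum]
    refine Finset.sum_congr rfl fun i _ => ?_
    rw [Finset.mul_sum]
    refine Finset.sum_congr rfl fun j _ => ?_
    ring
  · have h := congrArg Matrix.trace hB'
    simp only [Matrix.trace, Matrix.diag, Matrix.add_apply, Matrix.mul_apply,
      Matrix.transpose_apply, Matrix.of_apply, Matrix.vecMulVec_apply, star_trivial,
      Finset.sum_add_distrib] at h
    rw [Finset.sum_comm (f := fun i j => B' i j ^ 2), Finset.sum_comm (f := fun i j => B i j ^ 2)]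
    simp only [sq]
    exact h.symm

lemma coeff_bound {F : (Fin 3 → ℝ) → ℝ} (hpsd : ∀ v, 0 ≤ F v) :
    ∃ R : ℝ, ∀ c : Fin 6 → ℝ, (∀ v, (∑ j, c j * vm v j) ^ 2 ≤ F v) → ∀ j, |c j| ≤ R := by
  let S := F ![1,0,0] + F ![0,1,0] + F ![0,0,1] + F ![1,1,0] + F ![1,0,1] + F ![0,1,1] + 1
  refine ⟨3 * S, fun c hc => ?_⟩
  have n1 := hpsd ![1,0,0]
  have n2 := hpsd ![0,1,0]
  have n3 := hpsd ![0,0,1]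
  have n4 := hpsd ![1,1,0]
  have n5 := hpsd ![1,0,1]
  have n6 := hpsd ![0,1,1]
  have hS : 1 ≤ S := by simp only [S]; linarith
  have key : ∀ q : ℝ, q ^ 2 ≤ S → |q| ≤ S := by
    intro q hq
    apply abs_le_of_sq_le_sq _ (by linarith)
    nlinarith
  have k1 := key _ ((hc ![1,0,0]).trans (by simp only [S]; linarith))
  have k2 := key _ ((hc ![0,1,0]).trans (by simp only [S]; linarith))
  have k3 := key _ ((hc ![0,0,1]).trans (by simp only [S]; linarith))
  have k4 := key _ ((hc ![1,1,0]).trans (by simp only [S]; linarith))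
  have k5 := key _ ((hc ![1,0,1]).trans (by simp only [S]; linarith))
  have k6 := key _ ((hc ![0,1,1]).trans (by simp only [S]; linarith))
  clear_value S
  simp [Fin.sum_univ_six, vm] at k1 k2 k3 k4 k5 k6
  rw [abs_le] at k1 k2 k3 k4 k5 k6
  intro j
  rw [abs_le]
  fin_cases j <;> simp <;> constructor <;> linarith

lemma hform_quad (c : Fin 6 → ℝ) : ∃ p : MvPolynomial (Fin 3) ℝ, p.IsHomogeneous 2 ∧
    ∀ v, eval v p = ∑ j, c j * vm v j := by
  refine ⟨C (c 0)*X 0^2+C (c 1)*X 1^2+C (c 2)*X 2^2+C (c 3)*(X 0*X 1)+C (c 4)*(X 0*X 2)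
    +C (c 5)*(X 1*X 2), ?_, ?_⟩
  · refine ((((IsHomogeneous.add ?_ ?_).add ?_).add ?_).add ?_).add ?_
    · exact isHomogeneous_C_mul_X_pow _ _ _
    · exact isHomogeneous_C_mul_X_pow _ _ _
    · exact isHomogeneous_C_mul_X_pow _ _ _
    · exact ((isHomogeneous_X _ _).mul (isHomogeneous_X _ _)).C_mul _
    · exact ((isHomogeneous_X _ _).mul (isHomogeneous_X _ _)).C_mul _
    · exact ((isHomogeneous_X _ _).mul (isHomogeneous_X _ _)).C_mul _
  · intro v
    simp [Fin.sum_univ_six, vm]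

theorem stmt_10 (f : MvPolynomial (Fin 3) ℝ) (hhom : f.IsHomogeneous 4)
    (hpsd : ∀ p : Fin 3 → ℝ, 0 ≤ eval p f) :
    ∃ (n : ℕ) (g : Fin n → MvPolynomial (Fin 3) ℝ),
      (∀ i, (g i).IsHomogeneous 2) ∧ f = ∑ i, g i ^ 2 := by
  choose Q hQh hQe using hform_quad
  have hsos : ∀ (B : Fin 6 → Fin 6 → ℝ) v, eval v (∑ i, Q (B i) ^ 2) = sos B v := by
    intro B v
    simp [sos, hQe]
  let K : Set (Fin 6 → Fin 6 → ℝ) := {B | ∀ v, sos B v ≤ eval v f}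
  have hKc : IsClosed K := by
    have : K = ⋂ v, {B | sos B v ≤ eval v f} := by ext; simp [K]
    rw [this]
    refine isClosed_iInter fun v => isClosed_le ?_ continuous_const
    unfold sos
    fun_prop
  obtain ⟨R, hR⟩ := coeff_bound hpsd
  have hK : IsCompact K := by
    refine IsCompact.of_isClosed_subset (isCompact_Icc (a := fun _ _ => -R) (b := fun _ _ => R))
      hKc ?_
    intro B hB
    have : ∀ i j, |B i j| ≤ R := by
      intro i
      apply hR
      intro v
      refine le_trans ?_ (hB v)
      exact Finset.single_le_sum (f := fun i => (∑ j, B i j * vm v j) ^ 2)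
        (fun _ _ => sq_nonneg _) (Finset.mem_univ i)
    exact ⟨fun i j => (abs_le.1 (this i j)).1, fun i j => (abs_le.1 (this i j)).2⟩
  have hKn : K.Nonempty := ⟨0, fun v => by simpa [sos] using hpsd v⟩
  obtain ⟨B, hB, hmax⟩ := hK.exists_isMaxOn hKn
    (f := fun B => ∑ i, ∑ j, B i j ^ 2) (by fun_prop)
  refine ⟨6, fun i => Q (B i), fun i => hQh _, ?_⟩
  by_contra hne
  have hform : HForm 4 (fun v => eval v (f - ∑ i, Q (B i) ^ 2)) :=
    ⟨_, hhom.sub (IsHomogeneous.sum _ _ _ fun i _ => (hQh (B i)).pow 2), fun _ => rfl⟩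
  obtain ⟨q, hq, ⟨v, hv⟩, hle⟩ := good_of_psd hform
    (fun v => by
      change 0 ≤ eval v _
      rw [map_sub, hsos]
      exact sub_nonneg.2 (hB v))
    (by
      by_contra hcon
      push Not at hcon
      apply hne
      apply MvPolynomial.funext
      intro v
      have := hcon v
      rw [map_sub] at this
      linarith)
  obtain ⟨c, hc⟩ := hform2_coeffs hq
  obtain ⟨B', hB', htr⟩ := add_square B c
  have hmem : B' ∈ K := by
    intro w
    have := hle w
    simp only [map_sub] at this
    rw [← map_sub, map_sub, hsos, hc] at this
    rw [hB']
    linarith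
  have h1 : ∑ i, ∑ j, B' i j ^ 2 ≤ ∑ i, ∑ j, B i j ^ 2 := hmax hmem
  have h2 : ∑ j, c j ^ 2 ≤ 0 := by linarith
  apply hv
  rw [hc]
  have h3 := (Finset.sum_eq_zero_iff_of_nonneg (fun j _ => sq_nonneg (c j))).1
    (le_antisymm h2 (Finset.sum_nonneg fun j _ => sq_nonneg (c j)))
  refine Finset.sum_eq_zero fun j hj => ?_
  rw [pow_eq_zero_iff two_ne_zero |>.1 (h3 j hj), zero_mul]
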